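/- Let T = M_w E M_u be bounded on L²(Σ). If S(E(u)·E(w)) = S(E(|u|²)) ∩ S(E(|w|²)) = S(E(uw)) (up to μ-null sets), then T is centered if and only if |E(uw)|² = E(|u|²)·E(|w|²) μ-a.e. -/

import Mathlib

/-!
Write `E = μ[· | m]`, `a = E|u|²`, `b = E(uw)`, `c = E|w|²`. The adjoint of `T = M_w E M_u` is
`M_ū E M_w̄` (`adjoint_ae_eq`), so products of `T` and `T†` act on functions of the form `q · h`,
with `q ∈ L²` and `h` measurable with respect to `m`, by pulling `h` out of `E` (`apply_ae_eq`).

If `T` is centered, then `T†T` and `TT†` commute; evaluating both products at `w ∈ L²` gives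
`ū · a b c² = w · a |b|² c`. Multiplying by `u` and applying `E` yields `a²bc² = a b |b|² c`, and
the support hypothesis (`b ≠ 0` exactly where `ac ≠ 0`) allows cancelling to `ac = |b|²`.

Conversely, `|b|² = ac` is equality in the conditional Cauchy–Schwarz inequality, whence
`a w = b ū` and `c u = b w̄` (`cauchySchwarz_eq`). These identities make `T` normal, and a normal
operator is centered.

Since `a`, `b`, `c` need not be bounded, the identities are checked on the sets where the
`m`-measurable factors are bounded by `n`, which exhaust the space (`cut`, `ae_of_cut`).
-/

open MeasureTheory ComplexConjugate

/-- A bounded operator `A` on a Hilbert space is *centered* if the family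
`{A*ⁿ Aⁿ, Aᵏ A*ᵏ : n, k ≥ 0}` consists of mutually commuting operators. -/
def Centered {H : Type*} [NormedAddCommGroup H] [InnerProductSpace ℂ H] [CompleteSpace H]
    (A : H →L[ℂ] H) : Prop :=
  ∀ B ∈ {B : H →L[ℂ] H | ∃ n : ℕ,
      B = (ContinuousLinearMap.adjoint A) ^ n * A ^ n ∨
      B = A ^ n * (ContinuousLinearMap.adjoint A) ^ n},
    ∀ C ∈ {C : H →L[ℂ] H | ∃ k : ℕ,
      C = (ContinuousLinearMap.adjoint A) ^ k * A ^ k ∨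
      C = A ^ k * (ContinuousLinearMap.adjoint A) ^ k},
      Commute B C

section Helpers

variable {X : Type*} {m m0 : MeasurableSpace X} {μ : Measure X}

/-! ### Truncation -/

/-- The complex-valued indicator function of the set where both `h` and `k` have norm at
most `n`. -/
noncomputable def cut (h k : X → ℂ) (n : ℕ) : X → ℂ :=
  Set.indicator {x | ‖h x‖ ≤ n ∧ ‖k x‖ ≤ n} (fun _ => 1)

theorem cut_stronglyMeasurable {h k : X → ℂ} (hh : StronglyMeasurable[m] h)
    (hk : StronglyMeasurable[m] k) (n : ℕ) : StronglyMeasurable[m] (cut h k n) := by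
  refine StronglyMeasurable.indicator stronglyMeasurable_const ?_
  exact (hh.norm.measurableSet_le stronglyMeasurable_const).inter
    (hk.norm.measurableSet_le stronglyMeasurable_const)

theorem norm_cut_le (h k : X → ℂ) (n : ℕ) (x : X) : ‖cut h k n x‖ ≤ 1 := by
  unfold cut
  by_cases hx : x ∈ {x | ‖h x‖ ≤ n ∧ ‖k x‖ ≤ n} <;> simp [hx]

theorem norm_cut_mul_left_le (h k : X → ℂ) (n : ℕ) (x : X) : ‖cut h k n x * h x‖ ≤ n := by
  unfold cut
  by_cases hx : x ∈ {x | ‖h x‖ ≤ n ∧ ‖k x‖ ≤ n}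
  · simpa [hx] using hx.1
  · simp [hx]

theorem norm_cut_mul_right_le (h k : X → ℂ) (n : ℕ) (x : X) : ‖cut h k n x * k x‖ ≤ n := by
  unfold cut
  by_cases hx : x ∈ {x | ‖h x‖ ≤ n ∧ ‖k x‖ ≤ n}
  · simpa [hx] using hx.2
  · simp [hx]

theorem conj_cut (h k : X → ℂ) (n : ℕ) (x : X) : conj (cut h k n x) = cut h k n x := by
  unfold cut
  by_cases hx : x ∈ {x | ‖h x‖ ≤ n ∧ ‖k x‖ ≤ n} <;> simp [hx]

/-- The sets `{‖h‖ ≤ n, ‖k‖ ≤ n}` exhaust the space, so an almost everywhere property may be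
checked on each of them. -/
theorem ae_of_cut {P : X → Prop} (h k : X → ℂ)
    (H : ∀ n : ℕ, ∀ᵐ x ∂μ, cut h k n x = 1 → P x) : ∀ᵐ x ∂μ, P x := by
  rw [← ae_all_iff] at H
  filter_upwards [H] with x hx
  obtain ⟨n, hn⟩ := exists_nat_ge (max ‖h x‖ ‖k x‖)
  refine hx n ?_
  have : x ∈ {x | ‖h x‖ ≤ n ∧ ‖k x‖ ≤ n} :=
    ⟨(le_max_left _ _).trans hn, (le_max_right _ _).trans hn⟩
  simp only [cut, Set.indicator_of_mem this]

/-! ### Pull-out properties of complex conditional expectations -/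

theorem condExp_mul_left {h k : X → ℂ} (hh : StronglyMeasurable[m] h) (hk : Integrable k μ)
    (hhk : Integrable (fun x => h x * k x) μ) :
    μ[fun x => h x * k x | m] =ᵐ[μ] fun x => h x * (μ[k | m]) x :=
  condExp_bilin_of_stronglyMeasurable_left (ContinuousLinearMap.mul ℝ ℂ) hh hhk hk

theorem integrable_bdd_mul (hm : m ≤ m0) {h k : X → ℂ} (hh : StronglyMeasurable[m] h)
    {C : ℝ} (hC : ∀ x, ‖h x‖ ≤ C) (hk : Integrable k μ) :
    Integrable (fun x => h x * k x) μ :=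
  hk.bdd_mul (hh.mono hm).aestronglyMeasurable (Filter.Eventually.of_forall hC)

theorem memLp_bdd_mul (hm : m ≤ m0) {h k : X → ℂ} (hh : StronglyMeasurable[m] h)
    {C : ℝ} (hC : ∀ x, ‖h x‖ ≤ C) (hk : MemLp k 2 μ) :
    MemLp (fun x => h x * k x) 2 μ :=
  MemLp.of_le_mul (c := C) hk ((hh.mono hm).aestronglyMeasurable.mul hk.1)
    (Filter.Eventually.of_forall fun x => by
      rw [norm_mul]; exact mul_le_mul_of_nonneg_right (hC x) (norm_nonneg _))

/-- Self-adjointness of `E`, for a bounded `m`-measurable factor `h`. -/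
theorem integral_bdd_mul (hm : m ≤ m0) [SigmaFinite (μ.trim hm)] {h k : X → ℂ}
    (hh : StronglyMeasurable[m] h) {C : ℝ} (hC : ∀ x, ‖h x‖ ≤ C) (hk : Integrable k μ) :
    ∫ x, h x * k x ∂μ = ∫ x, h x * (μ[k | m]) x ∂μ := by
  rw [← integral_condExp hm]
  exact integral_congr_ae (condExp_mul_left hh hk (integrable_bdd_mul hm hh hC hk))

theorem integral_comb {f₁ f₂ f₃ f₄ : X → ℂ} (h₁ : Integrable f₁ μ) (h₂ : Integrable f₂ μ)
    (h₃ : Integrable f₃ μ) (h₄ : Integrable f₄ μ) :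
    ∫ x, (f₁ x - f₂ x - f₃ x + f₄ x) ∂μ =
      ∫ x, f₁ x ∂μ - ∫ x, f₂ x ∂μ - ∫ x, f₃ x ∂μ + ∫ x, f₄ x ∂μ := by
  have e₁ := integral_sub h₁ h₂
  have e₂ := integral_sub (h₁.sub h₂) h₃
  have e₃ := integral_add ((h₁.sub h₂).sub h₃) h₄
  simp only [Pi.sub_apply] at e₂ e₃
  rw [e₃, e₂, e₁]

theorem condExp_conj {k : X → ℂ} (hk : Integrable k μ) :
    (fun x => conj ((μ[k | m]) x)) =ᵐ[μ] μ[fun x => conj (k x) | m] :=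
  (Complex.conjCLE : ℂ →L[ℝ] ℂ).comp_condExp_comm hk

theorem condExp_coe {k : X → ℝ} (hk : Integrable k μ) :
    (fun x => (((μ[k | m]) x : ℝ) : ℂ)) =ᵐ[μ] μ[fun x => ((k x : ℝ) : ℂ) | m] :=
  Complex.ofRealCLM.comp_condExp_comm hk

theorem integrable_mul_of_memLp {p q : X → ℂ} (hp : MemLp p 2 μ) (hq : MemLp q 2 μ) :
    Integrable (fun x => p x * q x) μ :=
  hp.integrable_mul hq

theorem memLp_conj {p : X → ℂ} (hp : MemLp p 2 μ) : MemLp (fun x => conj (p x)) 2 μ :=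
  hp.star

/-- A pull-out property which does not require `h * k` to be integrable. -/
theorem condExp_pull_eq (hm : m ≤ m0) {h h' k k' : X → ℂ}
    (hh : StronglyMeasurable[m] h) (hh' : StronglyMeasurable[m] h')
    (hk : Integrable k μ) (hk' : Integrable k' μ)
    (H : ∀ᵐ x ∂μ, h x * k x = h' x * k' x) :
    ∀ᵐ x ∂μ, h x * (μ[k | m]) x = h' x * (μ[k' | m]) x := by
  refine ae_of_cut h h' fun n => ?_
  have hc := cut_stronglyMeasurable hh hh' n
  have e1 := condExp_mul_left (hc.mul hh) hk
    (integrable_bdd_mul hm (hc.mul hh) (norm_cut_mul_left_le h h' n) hk)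
  have e2 := condExp_mul_left (hc.mul hh') hk'
    (integrable_bdd_mul hm (hc.mul hh') (norm_cut_mul_right_le h h' n) hk')
  have e3 : μ[fun x => (cut h h' n * h) x * k x | m] =ᵐ[μ]
      μ[fun x => (cut h h' n * h') x * k' x | m] := by
    refine condExp_congr_ae ?_
    filter_upwards [H] with x hx
    simp only [Pi.mul_apply, mul_assoc, hx]
  filter_upwards [e1, e2, e3] with x h1 h2 h3 hx
  rw [h1, h2] at h3
  simpa [hx] using h3

/-! ### Equality in the conditional Cauchy–Schwarz inequality -/

/-- The case of equality in the conditional Cauchy–Schwarz inequality: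
if `|E(uw)|² = E|u|² E|w|²` then `E|u|² · w = E(uw) · ū`. -/
theorem cauchySchwarz_eq (hm : m ≤ m0) [SigmaFinite (μ.trim hm)] {u w : X → ℂ}
    (hu : MemLp u 2 μ) (hw : MemLp w 2 μ)
    (H : ∀ᵐ x ∂μ, (μ[fun y => u y * w y | m]) x * conj ((μ[fun y => u y * w y | m]) x) =
      (μ[fun y => u y * conj (u y) | m]) x * (μ[fun y => w y * conj (w y) | m]) x) :
    ∀ᵐ x ∂μ, (μ[fun y => u y * conj (u y) | m]) x * w x =
      (μ[fun y => u y * w y | m]) x * conj (u x) := by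
  set a := μ[fun y => u y * conj (u y) | m] with ha
  set b := μ[fun y => u y * w y | m] with hb
  set c := μ[fun y => w y * conj (w y) | m] with hc
  have hau : StronglyMeasurable[m] a := stronglyMeasurable_condExp
  have hbu : StronglyMeasurable[m] b := stronglyMeasurable_condExp
  have huu := integrable_mul_of_memLp hu (memLp_conj hu)
  have hww := integrable_mul_of_memLp hw (memLp_conj hw)
  have huw := integrable_mul_of_memLp hu hw
  have huw' : Integrable (fun x => conj (u x * w x)) μ := by
    simpa using integrable_mul_of_memLp (memLp_conj hu) (memLp_conj hw)
  have aconj : ∀ᵐ x ∂μ, conj (a x) = a x := by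
    have := condExp_conj (m := m) huu
    filter_upwards [this] with x hx
    rw [hx]
    simp [ha, mul_comm]
  have bconj := condExp_conj (m := m) huw
  refine ae_of_cut a b fun n => ?_
  have hχ := cut_stronglyMeasurable hau hbu n
  set χ := cut a b n with hχd
  -- `α` and `β` are the bounded truncations of `a` and `b`; the claim is `α w - β ū = 0`.
  set α : X → ℂ := fun x => χ x * a x with hα
  set β : X → ℂ := fun x => χ x * b x with hβ
  have αm : StronglyMeasurable[m] α := hχ.mul hau
  have βm : StronglyMeasurable[m] β := hχ.mul hbu
  have αn : ∀ x, ‖α x‖ ≤ n := norm_cut_mul_left_le a b n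
  have βn : ∀ x, ‖β x‖ ≤ n := norm_cut_mul_right_le a b n
  have cm : ∀ {f : X → ℂ}, StronglyMeasurable[m] f →
      StronglyMeasurable[m] (fun x => conj (f x)) := fun hf =>
    Complex.continuous_conj.comp_stronglyMeasurable hf
  have bd : ∀ {f g : X → ℂ}, (∀ x, ‖f x‖ ≤ n) → (∀ x, ‖g x‖ ≤ n) →
      ∀ x, ‖f x * conj (g x)‖ ≤ (n : ℝ) * n := fun hf hg x => by
    rw [norm_mul, RCLike.norm_conj]
    exact mul_le_mul (hf x) (hg x) (norm_nonneg _) (Nat.cast_nonneg _)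
  have m1 : StronglyMeasurable[m] (fun x => α x * conj (α x)) := αm.mul (cm αm)
  have m2 : StronglyMeasurable[m] (fun x => α x * conj (β x)) := αm.mul (cm βm)
  have m3 : StronglyMeasurable[m] (fun x => β x * conj (α x)) := βm.mul (cm αm)
  have m4 : StronglyMeasurable[m] (fun x => β x * conj (β x)) := βm.mul (cm βm)
  have i1 := integrable_bdd_mul hm m1 (bd αn αn) hww
  have i2 := integrable_bdd_mul hm m2 (bd αn βn) huw
  have i3 := integrable_bdd_mul hm m3 (bd βn αn) huw'
  have i4 := integrable_bdd_mul hm m4 (bd βn βn) huu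
  have j1 := integrable_bdd_mul (k := c) hm m1 (bd αn αn) integrable_condExp
  have j2 := integrable_bdd_mul (k := b) hm m2 (bd αn βn) integrable_condExp
  have j3 := integrable_bdd_mul (k := μ[fun x => conj (u x * w x) | m]) hm m3 (bd βn αn)
    integrable_condExp
  have j4 := integrable_bdd_mul (k := a) hm m4 (bd βn βn) integrable_condExp
  have key : ∫ x, ((((α x * conj (α x)) * (w x * conj (w x))
      - (α x * conj (β x)) * (u x * w x))
      - (β x * conj (α x)) * conj (u x * w x))
      + (β x * conj (β x)) * (u x * conj (u x))) ∂μ = 0 := by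
    rw [integral_comb i1 i2 i3 i4,
      integral_bdd_mul hm m1 (bd αn αn) hww, integral_bdd_mul hm m2 (bd αn βn) huw,
      integral_bdd_mul hm m3 (bd βn αn) huw', integral_bdd_mul hm m4 (bd βn βn) huu,
      ← integral_comb j1 j2 j3 j4]
    refine integral_eq_zero_of_ae ?_
    filter_upwards [H, aconj, bconj] with x hx hax hbx
    simp only [Pi.zero_apply]
    rw [← hbx]
    simp only [hα, hβ, map_mul, hax]
    linear_combination (-(χ x) * conj (χ x) * a x) * hx
  have key2 : ∫ x, ‖α x * w x - β x * conj (u x)‖ ^ 2 ∂μ = 0 := by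
    rw [← Complex.ofReal_inj, ← integral_complex_ofReal, Complex.ofReal_zero, ← key]
    refine integral_congr_ae (Filter.Eventually.of_forall fun x => ?_)
    simp only [Complex.ofReal_pow]
    rw [← Complex.mul_conj']
    simp only [map_sub, map_mul, Complex.conj_conj]
    ring
  have hφ : MemLp (fun x => α x * w x - β x * conj (u x)) 2 μ :=
    (memLp_bdd_mul hm αm αn hw).sub (memLp_bdd_mul hm βm βn (memLp_conj hu))
  rw [integral_eq_zero_iff_of_nonneg (fun x => by positivity)
    ((memLp_two_iff_integrable_sq_norm hφ.1).1 hφ)] at key2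
  filter_upwards [key2] with x hx h1
  have h2 : α x * w x - β x * conj (u x) = 0 := by simpa using hx
  simp only [hα, hβ, h1, one_mul] at h2
  exact sub_eq_zero.1 h2

/-! ### Weighted conditional type operators and their adjoints -/

/-- The action of `M_w E M_u` on a function `q · h` with `h` measurable with respect to `m`. -/
theorem apply_ae_eq {u w q h : X → ℂ} (hu : MemLp u 2 μ) (hq : MemLp q 2 μ)
    (hh : StronglyMeasurable[m] h) {T : Lp ℂ 2 μ → Lp ℂ 2 μ}
    (hT : ∀ f : Lp ℂ 2 μ, ⇑(T f) =ᵐ[μ] fun x => w x * (μ[fun y => u y * f y | m]) x)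
    {F : Lp ℂ 2 μ} (hF : ⇑F =ᵐ[μ] fun x => q x * h x) :
    ⇑(T F) =ᵐ[μ] fun x => w x * (h x * (μ[fun y => u y * q y | m]) x) := by
  have e : (fun y => u y * F y) =ᵐ[μ] fun y => h y * (u y * q y) := by
    filter_upwards [hF] with x hx
    rw [hx]; ring
  have i : Integrable (fun y => h y * (u y * q y)) μ :=
    (integrable_mul_of_memLp hu (Lp.memLp F)).congr e
  filter_upwards [hT F, condExp_congr_ae (m := m) e,
    condExp_mul_left hh (integrable_mul_of_memLp hu hq) i] with x h1 h2 h3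
  rw [h1, h2, h3]

/-- The adjoint of `M_w E M_u` is `M_ū E M_w̄`. -/
theorem adjoint_ae_eq (hm : m ≤ m0) [SigmaFinite (μ.trim hm)] {u w : X → ℂ}
    (hu : MemLp u 2 μ) (hw : MemLp w 2 μ) (T : Lp ℂ 2 μ →L[ℂ] Lp ℂ 2 μ)
    (hT : ∀ f : Lp ℂ 2 μ, ⇑(T f) =ᵐ[μ] fun x => w x * (μ[fun y => u y * f y | m]) x)
    (g : Lp ℂ 2 μ) :
    ⇑(ContinuousLinearMap.adjoint T g) =ᵐ[μ]
      fun x => conj (u x) * (μ[fun y => conj (w y) * g y | m]) x := by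
  set S := ContinuousLinearMap.adjoint T g with hS
  have hwg : Integrable (fun y => w y * conj (g y)) μ :=
    integrable_mul_of_memLp hw (memLp_conj (Lp.memLp g))
  set h := μ[fun y => w y * conj (g y) | m] with hh
  have hhm : StronglyMeasurable[m] h := stronglyMeasurable_condExp
  have hconj : ∀ᵐ x ∂μ, conj (h x) = (μ[fun y => conj (w y) * g y | m]) x := by
    filter_upwards [condExp_conj (m := m) hwg] with x hx
    rw [hx]; simp
  refine ae_of_cut h h fun n => ?_
  have hχ := cut_stronglyMeasurable hhm hhm n
  have hχ1 := norm_cut_le h h n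
  have hχc := conj_cut h h n
  have hχn := norm_cut_mul_left_le h h n
  set χ := cut h h n
  have hχh : StronglyMeasurable[m] (fun x => χ x * h x) := hχ.mul hhm
  have G1 : MemLp (fun x => χ x * S x) 2 μ := memLp_bdd_mul hm hχ hχ1 (Lp.memLp S)
  have G2 : MemLp (fun x => conj ((χ x * h x) * u x)) 2 μ :=
    memLp_conj (memLp_bdd_mul hm hχh hχn hu)
  -- `χ · T†g` and `χ · h̄ ū` have the same inner product with every `f`: move `χ` onto `f`, use
  -- the definition of the adjoint, and then the self-adjointness of `E`.
  have main : G1.toLp _ = G2.toLp _ := by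
    refine ext_inner_right ℂ fun f => ?_
    have F1 : MemLp (fun x => χ x * f x) 2 μ := memLp_bdd_mul hm hχ hχ1 (Lp.memLp f)
    have huf := integrable_mul_of_memLp hu (Lp.memLp f)
    set F := F1.toLp _ with hF
    have l1 : inner ℂ (G1.toLp _) f = inner ℂ S F := by
      rw [L2.inner_def, L2.inner_def]
      refine integral_congr_ae ?_
      filter_upwards [G1.coeFn_toLp, F1.coeFn_toLp] with x h1 h2
      rw [h1, hF, h2]
      simp only [RCLike.inner_apply, map_mul, hχc]
      ring
    have l2 : inner ℂ S F = ∫ x, (μ[fun y => u y * F y | m]) x * (w x * conj (g x)) ∂μ := by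
      rw [hS, ContinuousLinearMap.adjoint_inner_left, L2.inner_def]
      refine integral_congr_ae ?_
      filter_upwards [hT F] with x h1
      rw [h1]
      simp only [RCLike.inner_apply]
      ring
    have l3 : ∫ x, (μ[fun y => u y * F y | m]) x * (w x * conj (g x)) ∂μ =
        ∫ x, (μ[fun y => u y * F y | m]) x * h x ∂μ := by
      rw [← integral_condExp hm]
      refine integral_congr_ae (condExp_mul_left stronglyMeasurable_condExp hwg ?_)
      refine (integrable_mul_of_memLp (Lp.memLp (T F)) (memLp_conj (Lp.memLp g))).congr ?_
      filter_upwards [hT F] with x h1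
      rw [h1]; ring
    have l4 : μ[fun y => u y * F y | m] =ᵐ[μ]
        fun x => χ x * (μ[fun y => u y * f y | m]) x := by
      refine (condExp_congr_ae ?_).trans
        (condExp_mul_left hχ huf (integrable_bdd_mul hm hχ hχ1 huf))
      filter_upwards [F1.coeFn_toLp] with x h1
      rw [hF, h1]; ring
    have l5 : ∫ x, (μ[fun y => u y * F y | m]) x * h x ∂μ =
        ∫ x, (χ x * h x) * (u x * f x) ∂μ := by
      rw [integral_bdd_mul hm hχh hχn huf]
      refine integral_congr_ae ?_
      filter_upwards [l4] with x h1
      rw [h1]; ring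
    rw [l1, l2, l3, l5, L2.inner_def]
    refine integral_congr_ae ?_
    filter_upwards [G2.coeFn_toLp] with x h1
    rw [h1]
    simp only [RCLike.inner_apply, Complex.conj_conj]
    ring
  filter_upwards [G1.coeFn_toLp, G2.coeFn_toLp, hconj] with x h1 h2 h3 hx
  rw [main, h2] at h1
  rw [← h3]
  simp only [hx, one_mul, map_mul] at h1
  rw [← h1]; ring

end Helpers

/-! ### Centered operators -/

/-- Normal operators are centered. -/
theorem centered_of_commute {H : Type*} [NormedAddCommGroup H] [InnerProductSpace ℂ H]
    [CompleteSpace H] {A : H →L[ℂ] H} (h : Commute (ContinuousLinearMap.adjoint A) A) :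
    Centered A := by
  have hA : ∀ n k, Commute (ContinuousLinearMap.adjoint A ^ n) (A ^ k) := fun n k => h.pow_pow n k
  have hA' : ∀ n k, Commute (A ^ n) (ContinuousLinearMap.adjoint A ^ k) :=
    fun n k => h.symm.pow_pow n k
  have h1 : ∀ n k, Commute (A ^ n) (A ^ k) := fun n k => Commute.pow_pow (Commute.refl A) n k
  have h2 : ∀ n k, Commute (ContinuousLinearMap.adjoint A ^ n)
      (ContinuousLinearMap.adjoint A ^ k) :=
    fun n k => Commute.pow_pow (Commute.refl _) n k
  rintro B ⟨n, rfl | rfl⟩ C ⟨k, rfl | rfl⟩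
  all_goals
    refine Commute.mul_left (Commute.mul_right ?_ ?_) (Commute.mul_right ?_ ?_) <;>
    first | exact hA _ _ | exact hA' _ _ | exact h1 _ _ | exact h2 _ _

/-- **Corollary 2.6.** If `S(E(u) E(w)) = S(E(|u|²)) ∩ S(E(|w|²)) = S(E(uw))` (up to
μ-null sets), then the bounded operator `T = M_w E M_u` on `L²(Σ)` is centered iff
`|E(uw)|² = E(|u|²) E(|w|²)` μ-a.e. -/
theorem stmt_6 {X : Type*} [m0 : MeasurableSpace X] {μ : Measure X} [μ.IsComplete]
    [SigmaFinite μ] {m : MeasurableSpace X} (hm : m ≤ m0) [SigmaFinite (μ.trim hm)]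
    (u w : X → ℂ) (hu : AEMeasurable u μ) (hw : AEMeasurable w μ)
    (hui : Integrable u μ) (hwi : Integrable w μ)
    (hu2 : Integrable (fun x => ‖u x‖ ^ 2) μ) (hw2 : Integrable (fun x => ‖w x‖ ^ 2) μ)
    (huw : Integrable (fun x => u x * w x) μ)
    (hintu : ∀ f : Lp ℂ 2 μ, Integrable (fun x => u x * f x) μ)
    (T : Lp ℂ 2 μ →L[ℂ] Lp ℂ 2 μ)
    (hT : ∀ f : Lp ℂ 2 μ, ⇑(T f) =ᵐ[μ] fun x => w x * (μ[fun y => u y * f y | m]) x)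
    (hsupp : ∀ᵐ x ∂μ,
      (((μ[u | m]) x * (μ[w | m]) x ≠ 0) ↔
        ((μ[fun y => ‖u y‖ ^ 2 | m]) x ≠ 0 ∧ (μ[fun y => ‖w y‖ ^ 2 | m]) x ≠ 0)) ∧
      (((μ[fun y => ‖u y‖ ^ 2 | m]) x ≠ 0 ∧ (μ[fun y => ‖w y‖ ^ 2 | m]) x ≠ 0) ↔
        (μ[fun y => u y * w y | m]) x ≠ 0)) :
    Centered T ↔
      ∀ᵐ x ∂μ, ‖(μ[fun y => u y * w y | m]) x‖ ^ 2 =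
        (μ[fun y => ‖u y‖ ^ 2 | m]) x * (μ[fun y => ‖w y‖ ^ 2 | m]) x := by
  have hu' : MemLp u 2 μ := (memLp_two_iff_integrable_sq_norm hu.aestronglyMeasurable).2 hu2
  have hw' : MemLp w 2 μ := (memLp_two_iff_integrable_sq_norm hw.aestronglyMeasurable).2 hw2
  have hcu := memLp_conj hu'
  have hcw := memLp_conj hw'
  have hA := adjoint_ae_eq hm hu' hw' T hT
  set b := μ[fun y => u y * w y | m] with hb
  set a := μ[fun y => u y * conj (u y) | m] with ha
  set c := μ[fun y => w y * conj (w y) | m] with hc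
  have ham : StronglyMeasurable[m] a := stronglyMeasurable_condExp
  have hbm : StronglyMeasurable[m] b := stronglyMeasurable_condExp
  have hcm : StronglyMeasurable[m] c := stronglyMeasurable_condExp
  have hbm' : StronglyMeasurable[m] (fun x => conj (b x)) :=
    Complex.continuous_conj.comp_stronglyMeasurable hbm
  have hc' : μ[fun y => conj (w y) * w y | m] = c := by simp only [hc, mul_comm]
  have hb' : (fun x => conj (b x)) =ᵐ[μ] μ[fun y => conj (w y) * conj (u y) | m] := by
    refine (condExp_conj (m := m) huw).trans ?_
    simp only [map_mul, mul_comm]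
    rfl
  have har : ∀ᵐ x ∂μ, (((μ[fun y => ‖u y‖ ^ 2 | m]) x : ℝ) : ℂ) = a x := by
    filter_upwards [condExp_coe (m := m) hu2] with x hx
    rw [hx]; simp only [ha, Complex.ofReal_pow, Complex.mul_conj']
  have hcr : ∀ᵐ x ∂μ, (((μ[fun y => ‖w y‖ ^ 2 | m]) x : ℝ) : ℂ) = c x := by
    filter_upwards [condExp_coe (m := m) hw2] with x hx
    rw [hx]; simp only [hc, Complex.ofReal_pow, Complex.mul_conj']
  -- The right-hand side of the equivalence, in terms of complex-valued functions.
  have hiff : (∀ᵐ x ∂μ, ‖b x‖ ^ 2 =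
      (μ[fun y => ‖u y‖ ^ 2 | m]) x * (μ[fun y => ‖w y‖ ^ 2 | m]) x) ↔
      ∀ᵐ x ∂μ, b x * conj (b x) = a x * c x := by
    refine Filter.eventually_congr ?_
    filter_upwards [har, hcr] with x h1 h2
    rw [← h1, ← h2, Complex.mul_conj']
    norm_cast
  rw [hiff]
  constructor
  · intro hcent
    have hcomm : Commute (ContinuousLinearMap.adjoint T * T)
        (T * ContinuousLinearMap.adjoint T) :=
      hcent _ ⟨1, Or.inl (by simp)⟩ _ ⟨1, Or.inr (by simp)⟩
    set W := hw'.toLp w with hW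
    have hcomm' := DFunLike.congr_fun hcomm.eq W
    simp only [mul_apply_eq_comp] at hcomm'
    have s0 : ⇑W =ᵐ[μ] fun x => w x * (fun _ => (1 : ℂ)) x := by
      filter_upwards [hw'.coeFn_toLp] with x hx
      rw [hx, mul_one]
    -- `T†T TT† w = ū · a b c²`
    have p1 := apply_ae_eq hcw hw' stronglyMeasurable_const hA s0
    rw [hc'] at p1
    have p1m : StronglyMeasurable[m] (fun x => (fun _ => (1 : ℂ)) x * c x) :=
      stronglyMeasurable_const.mul hcm
    have p2 := apply_ae_eq hu' hcu p1m hT p1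
    have p2m := p1m.mul ham
    have p3 := apply_ae_eq hu' hw' p2m hT p2
    have p3m := p2m.mul hbm
    have p4 := apply_ae_eq hcw hw' p3m hA p3
    rw [hc'] at p4
    have p4m := p3m.mul hcm
    -- `TT† T†T w = w · a |b|² c`
    have q1 := apply_ae_eq hu' hw' stronglyMeasurable_const hT s0
    have q1m : StronglyMeasurable[m] (fun x => (fun _ => (1 : ℂ)) x * b x) :=
      stronglyMeasurable_const.mul hbm
    have q2 := apply_ae_eq hcw hw' q1m hA q1
    rw [hc'] at q2
    have q2m := q1m.mul hcm
    have q3 := apply_ae_eq hcw hcu q2m hA q2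
    have q3m : StronglyMeasurable[m] (fun x => ((fun x => (fun _ => (1 : ℂ)) x * b x) * c) x *
        (μ[fun y => conj (w y) * conj (u y) | m]) x) := q2m.mul stronglyMeasurable_condExp
    have q4 := apply_ae_eq hu' hcu q3m hT q3
    have q4m := q3m.mul ham
    rw [hcomm'] at p4
    have hE := condExp_pull_eq hm p4m q4m (integrable_mul_of_memLp hu' hcu) huw (by
      filter_upwards [p4, q4] with x h1 h2
      rw [h1] at h2
      simp only [Pi.mul_apply] at h2 ⊢
      linear_combination (u x) * h2)
    filter_upwards [hE, hsupp, har, hcr, hb'] with x h1 h2 h3 h4 h5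
    have h6 := h2.2
    rw [← Complex.ofReal_ne_zero, ← Complex.ofReal_ne_zero, h3, h4] at h6
    simp only [Pi.mul_apply, one_mul, ← h5] at h1
    by_cases hbx : b x = 0
    · have : ¬ (a x ≠ 0 ∧ c x ≠ 0) := fun h => h6.1 h hbx
      rw [hbx, zero_mul]
      by_contra hne
      exact this (mul_ne_zero_iff.1 (Ne.symm hne))
    · obtain ⟨hax, hcx⟩ := h6.2 hbx
      have h7 : (a x * b x * c x) * (b x * conj (b x)) = (a x * b x * c x) * (a x * c x) := by
        linear_combination -h1
      exact mul_left_cancel₀ (mul_ne_zero (mul_ne_zero hax hbx) hcx) h7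
  · intro h
    have k1 := cauchySchwarz_eq hm hu' hw' h
    have k2 := cauchySchwarz_eq hm hw' hu' (by
      filter_upwards [h] with x hx
      simp only [mul_comm (w _) (u _)]
      rw [← hb, hx, mul_comm])
    simp only [mul_comm (w _) (u _)] at k2
    refine centered_of_commute (ContinuousLinearMap.ext fun f => Lp.ext ?_)
    simp only [mul_apply_eq_comp]
    have r1 := apply_ae_eq hcw hw' stronglyMeasurable_condExp hA (hT f)
    have r2 := apply_ae_eq hu' hcu stronglyMeasurable_condExp hT (hA f)
    rw [hc'] at r1
    have aconj : ∀ᵐ x ∂μ, conj (a x) = a x := by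
      filter_upwards [har] with x hx
      rw [← hx, Complex.conj_ofReal]
    have cconj : ∀ᵐ x ∂μ, conj (c x) = c x := by
      filter_upwards [hcr] with x hx
      rw [← hx, Complex.conj_ofReal]
    -- `a E(w̄ f) = b̄ E(u f)`, by conjugating `a w = b ū`, multiplying by `f` and applying `E`
    have k3 := condExp_pull_eq hm ham hbm'
      (integrable_mul_of_memLp hcw (Lp.memLp f)) (integrable_mul_of_memLp hu' (Lp.memLp f)) (by
      filter_upwards [k1, aconj] with x h1 h2
      have h3 := congrArg conj h1
      simp only [map_mul, Complex.conj_conj] at h3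
      rw [← ha, ← hb, h2] at h3
      linear_combination (f x) * h3)
    filter_upwards [r1, r2, k2, k3, cconj] with x h1 h2 h3 h4 h5
    rw [h1, h2]
    have h6 := congrArg conj h3
    simp only [map_mul, Complex.conj_conj] at h6
    rw [← hb, ← hc, h5] at h6
    linear_combination (μ[fun y => u y * f y | m]) x * h6 - w x * h4
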